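/- arXiv:2202.05335 — 3 statements merged into one kernel-verified Lean document; each statement's English description precedes it below -/
import Mathlib

section
/- The number of parking functions of length k is (k+1)^{k-1}, for every positive integer k. -/
/-!
Pollak's circle argument, in the form of a cycle lemma. Put `N = k + 1` and consider all `N ^ k`
functions `f : Fin k → ZMod N`. Shifting the values to start from `0`, parking functions are the
`f` such that, for every `j ≤ k`, at least `j` of the values lie in `{0, …, j - 1}`
(`IsCircularParking`, `isParkingFunction_iff`). Each `f` has exactly one translate `f - r` with this
property (`existsUnique_isCircularParking_sub`), so translation identifies the product of the set
of parking functions with `ZMod N` with the set of all functions, and the number of parking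
functions is `N ^ k / N`.

The unique translate is found from the walk `S n = ∑ m < n, (#{i | f i = m} - 1)`, which drops by
exactly `1` over each period `N`. The translate by `r` is parking precisely when `S r ≤ S (r + j)`
for all `j ≤ k`, which singles out the first place in a period where `S` is minimal.
-/

noncomputable section

/-- `π : Fin k → ℕ` (interpreted as a vector in `{1,…,k}^k`) is a parking function of
length `k` if its nondecreasing rearrangement `π ∘ Tuple.sort π` satisfies
`π_(i) ≤ i` for all `i ∈ {1,…,k}` (here the `i`-th sorted entry has 0-based index `i - 1`). -/
def IsParkingFunction {k : ℕ} (π : Fin k → ℕ) : Prop :=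
  (∀ i, π i ∈ Finset.Icc 1 k) ∧
  ∀ i : Fin k, π (Tuple.sort π i) ≤ (i : ℕ) + 1

/-- The parking condition for values in `{0, …, k}`, regarded as residues modulo `k + 1`: at least
`j` values lie in `{0, …, j - 1}`, for every `j ≤ k`. The case `j = k` excludes the value `k`. -/
def IsCircularParking {k : ℕ} (f : Fin k → ZMod (k + 1)) : Prop :=
  ∀ j ≤ k, j ≤ (Finset.univ.filter fun i => (f i).val < j).card

/-- The walk whose `m`-th step is the number of `i` with `f i = m`, minus one, where `m` is read
modulo `k + 1`. -/
def parkingWalk {k : ℕ} (f : Fin k → ZMod (k + 1)) (n : ℕ) : ℤ :=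
  ∑ m ∈ Finset.range n, (((Finset.univ.filter fun i => f i = (m : ZMod (k + 1))).card : ℤ) - 1)

lemma isParkingFunction_iff {k : ℕ} (π : Fin k → ℕ) :
    IsParkingFunction π ↔ (∀ i, π i ∈ Finset.Icc 1 k) ∧
      ∀ j ≤ k, j ≤ (Finset.univ.filter fun i => π i ≤ j).card := by
  have key : ∀ i : Fin k, π (Tuple.sort π i) ≤ (i : ℕ) + 1 ↔
      (i : ℕ) + 1 ≤ (Finset.univ.filter fun m => π m ≤ (i : ℕ) + 1).card := by
    intro i
    have h := Tuple.lt_card_le_iff_apply_le_of_monotone (f := π ∘ Tuple.sort π) (j := i)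
      (a := (i : ℕ) + 1) (Tuple.monotone_sort π)
    have hc : (Finset.univ.filter fun m => (π ∘ Tuple.sort π) m ≤ (i : ℕ) + 1).card =
        (Finset.univ.filter fun m => π m ≤ (i : ℕ) + 1).card := by
      rw [← Fintype.card_subtype, ← Fintype.card_subtype]
      exact Fintype.card_congr ((Tuple.sort π).subtypeEquiv fun _ => Iff.rfl)
    rw [hc] at h
    exact h.symm
  refine and_congr_right fun _ => ⟨fun h j hj => ?_, fun h i => (key i).2 (h _ i.isLt)⟩
  rcases j with _ | j
  · exact Nat.zero_le _
  · exact (key ⟨j, hj⟩).1 (h ⟨j, hj⟩)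

/-- Over an interval of length at most one period, the walk counts the values falling in the
corresponding arc of the circle. -/
lemma parkingWalk_add {k : ℕ} (f : Fin k → ZMod (k + 1)) (r j : ℕ) (hj : j ≤ k + 1) :
    parkingWalk f (r + j) = parkingWalk f r +
      (Finset.univ.filter fun i => (f i - (r : ZMod (k + 1))).val < j).card - j := by
  induction j with
  | zero => simp
  | succ j ih =>
    have h1 : (Finset.univ.filter fun i => (f i - (r : ZMod (k + 1))).val < j + 1) =
        (Finset.univ.filter fun i => (f i - (r : ZMod (k + 1))).val < j) ∪
        (Finset.univ.filter fun i => f i = ((r + j : ℕ) : ZMod (k + 1))) := by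
      ext i
      have h2 : f i = ((r + j : ℕ) : ZMod (k + 1)) ↔ (f i - (r : ZMod (k + 1))).val = j := by
        rw [← ZMod.val_cast_of_lt (show j < k + 1 by omega), (ZMod.val_injective _).eq_iff,
          sub_eq_iff_eq_add', ZMod.val_cast_of_lt (show j < k + 1 by omega)]
        push_cast
        rfl
      simp only [Finset.mem_filter, Finset.mem_univ, true_and, Finset.mem_union, h2]
      omega
    have h3 : Disjoint (Finset.univ.filter fun i => (f i - (r : ZMod (k + 1))).val < j)
        (Finset.univ.filter fun i => f i = ((r + j : ℕ) : ZMod (k + 1))) := by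
      rw [Finset.disjoint_left]
      intro i hi hi'
      simp only [Finset.mem_filter, Finset.mem_univ, true_and] at hi hi'
      rw [hi', Nat.cast_add, add_sub_cancel_left, ZMod.val_cast_of_lt (by omega)] at hi
      exact lt_irrefl _ hi
    rw [h1, Finset.card_union_of_disjoint h3, ← add_assoc, parkingWalk, Finset.sum_range_succ,
      ← parkingWalk, ih (by omega)]
    push_cast
    ring

lemma parkingWalk_add_period {k : ℕ} (f : Fin k → ZMod (k + 1)) (r : ℕ) :
    parkingWalk f (r + (k + 1)) = parkingWalk f r - 1 := by
  rw [parkingWalk_add f r (k + 1) le_rfl, Finset.filter_true_of_mem fun i _ => ZMod.val_lt _]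
  rw [Finset.card_univ, Fintype.card_fin]
  push_cast
  ring

lemma isCircularParking_sub_iff {k : ℕ} (f : Fin k → ZMod (k + 1)) (r : ℕ) :
    IsCircularParking (fun i => f i - (r : ZMod (k + 1))) ↔
      ∀ j ≤ k, parkingWalk f r ≤ parkingWalk f (r + j) := by
  refine forall₂_congr fun j hj => ?_
  rw [parkingWalk_add f r j (by omega)]
  dsimp only
  omega

/-- The cycle lemma: the translate is by the first place in a period where the walk is minimal. -/
lemma existsUnique_isCircularParking_sub {k : ℕ} (f : Fin k → ZMod (k + 1)) :
    ∃! r : ZMod (k + 1), IsCircularParking (fun i => f i - r) := by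
  -- Two good starting points `a < b` in one period would give `S a ≤ S b ≤ S (a + N) = S a - 1`.
  have uniq : ∀ a b : ℕ, a < b → b < k + 1 →
      (∀ j ≤ k, parkingWalk f a ≤ parkingWalk f (a + j)) →
      (∀ j ≤ k, parkingWalk f b ≤ parkingWalk f (b + j)) → False := by
    intro a b hab hb ha' hb'
    have h1 := ha' (b - a) (by omega)
    have h2 := hb' (a + (k + 1) - b) (by omega)
    rw [show a + (b - a) = b by omega] at h1
    rw [show b + (a + (k + 1) - b) = a + (k + 1) by omega, parkingWalk_add_period] at h2
    omega
  have hex : ∃ r, r < k + 1 ∧ ∀ m < k + 1, parkingWalk f r ≤ parkingWalk f m := by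
    obtain ⟨r, hr, h⟩ := Finset.exists_min_image (Finset.range (k + 1)) (parkingWalk f) ⟨0, by simp⟩
    exact ⟨r, by simpa using hr, fun m hm => h m (by simpa using hm)⟩
  classical
  obtain ⟨hr, hmin⟩ := Nat.find_spec hex
  have hfirst := fun m => Nat.find_min hex (m := m)
  set r := Nat.find hex
  have hgood : ∀ j ≤ k, parkingWalk f r ≤ parkingWalk f (r + j) := by
    intro j hj
    by_cases hlt : r + j < k + 1
    · exact hmin _ hlt
    -- Past the period the walk has dropped by `1`, but before `r` it was strictly above `S r`.
    · obtain ⟨m, hm⟩ : ∃ m, r + j = m + (k + 1) := ⟨r + j - (k + 1), by omega⟩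
      rw [hm, parkingWalk_add_period]
      by_contra hcon
      exact hfirst m (by omega) ⟨by omega, fun n hn => by have := hmin n hn; omega⟩
  refine ⟨(r : ZMod (k + 1)), (isCircularParking_sub_iff f r).2 hgood, fun s hs => ?_⟩
  have hs' : IsCircularParking (fun i => f i - ((s.val : ℕ) : ZMod (k + 1))) := by
    simpa only [ZMod.natCast_zmod_val] using hs
  rw [isCircularParking_sub_iff] at hs'
  rcases lt_trichotomy s.val r with h | h | h
  · exact (uniq _ _ h hr hs' hgood).elim
  · rw [← h, ZMod.natCast_zmod_val]
  · exact (uniq _ _ h (ZMod.val_lt s) hgood hs').elim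

lemma card_isCircularParking_mul (k : ℕ) :
    Nat.card {f : Fin k → ZMod (k + 1) // IsCircularParking f} * (k + 1) = (k + 1) ^ k := by
  have hbij : Function.Bijective
      fun p : {f : Fin k → ZMod (k + 1) // IsCircularParking f} × ZMod (k + 1) =>
        (fun i => p.1.1 i + p.2 : Fin k → ZMod (k + 1)) := by
    constructor
    · rintro ⟨⟨f, hf⟩, r⟩ ⟨⟨g, hg⟩, s⟩ h
      have h' : ∀ i, f i + r = g i + s := fun i => congrFun h i
      have hrs : r = s := by
        refine (existsUnique_isCircularParking_sub fun i => f i + r).unique ?_ ?_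
        · simpa using hf
        · simpa [h'] using hg
      subst hrs
      have hfg : f = g := funext fun i => add_right_cancel (h' i)
      subst hfg
      rfl
    · intro f
      obtain ⟨r, hr, -⟩ := existsUnique_isCircularParking_sub f
      exact ⟨(⟨_, hr⟩, r), by simp⟩
  have h := Nat.card_eq_of_bijective _ hbij
  rw [Nat.card_prod, Nat.card_fun] at h
  simpa using h

lemma card_parking_eq_card_circular (k : ℕ) :
    Nat.card {f : Fin k → ZMod (k + 1) // IsCircularParking f} =
      Nat.card {π : Fin k → ℕ // IsParkingFunction π} := by
  have hto : ∀ f : Fin k → ZMod (k + 1), IsCircularParking f →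
      IsParkingFunction fun i => (f i).val + 1 := by
    intro f hf
    refine (isParkingFunction_iff _).2 ⟨fun i => ?_, hf⟩
    -- The condition for `j = k` says that all `k` values are below `k`.
    have hall : (Finset.univ.filter fun i => (f i).val < k) = Finset.univ :=
      Finset.eq_univ_of_card _ (le_antisymm (Finset.card_le_univ _) (by simpa using hf k le_rfl))
    have hi := Finset.mem_univ i
    rw [← hall, Finset.mem_filter] at hi
    exact Finset.mem_Icc.2 ⟨by omega, hi.2⟩
  refine Nat.card_eq_of_bijective (fun f => ⟨fun i => (f.1 i).val + 1, hto f.1 f.2⟩) ⟨?_, ?_⟩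
  · intro f g h
    refine Subtype.ext (funext fun i => ZMod.val_injective _ ?_)
    exact Nat.succ_injective (congrFun (congrArg Subtype.val h) i)
  · rintro ⟨π, hπ⟩
    have hcount := (isParkingFunction_iff π).1 hπ
    have hval : ∀ i, ((π i - 1 : ℕ) : ZMod (k + 1)).val + 1 = π i := by
      intro i
      have := Finset.mem_Icc.1 (hcount.1 i)
      rw [ZMod.val_cast_of_lt (by omega)]
      omega
    refine ⟨⟨fun i => ((π i - 1 : ℕ) : ZMod (k + 1)), fun j hj => ?_⟩,
      Subtype.ext (funext hval)⟩
    simpa only [← Nat.succ_le_iff, Nat.succ_eq_add_one, hval] using hcount.2 j hj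

/-- The number of parking functions of length `k` is `(k+1)^(k-1)`. -/
theorem card_parkingFunctions (k : ℕ) (hk : 0 < k) :
    Nat.card {π : Fin k → ℕ // IsParkingFunction π} = (k + 1) ^ (k - 1) := by
  have h := card_isCircularParking_mul k
  rw [card_parking_eq_card_circular] at h
  apply Nat.eq_of_mul_eq_mul_right (Nat.succ_pos k)
  rw [Nat.succ_eq_add_one, h, ← pow_succ, Nat.sub_add_cancel hk]
end
end

section
/- For every positive integer k, the unit polytope P̄_k is the disjoint union over all Dyck path vectors d ∈ D_k of the sub-polytopes P̄_{k,d}; that is, P̄_k = ⊔_{d ∈ D_k} P̄_{k,d}, and the sets P̄_{k,d} are pairwise disjoint. -/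
/-!
The half-open unit intervals `[n - 1, n)`, `n ≥ 1`, partition `[0, ∞)`, so the only `d` whose
sub-polytope can contain a point `x` is `d i = ⌊x i⌋ + 1`; this gives disjointness. For `x` in the
unit polytope this `d` is a Dyck path vector: it is nondecreasing because `x` is
(`monotone_of_lt_next`) and the floor is monotone, and the bounds `1 ≤ d_i ≤ i` are the
bounds `0 ≤ x_i < i`. Conversely `d_i - 1 ≤ x_i < d_i` and `1 ≤ d_i ≤ i` give `0 ≤ x_i < i`.
-/

noncomputable section

/-- A Dyck path vector of length `k`: a nondecreasing vector with `1 ≤ d_i ≤ i`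
for all `i ∈ {1,…,k}` (0-based index `i - 1`). -/
def IsDyckVector {k : ℕ} (d : Fin k → ℕ) : Prop :=
  Monotone d ∧ ∀ i : Fin k, 1 ≤ d i ∧ d i ≤ (i : ℕ) + 1

/-- The unit polytope `P̄_k = {x ∈ ℝ^k : 0 ≤ x_i < i ∀ i, x_i < x_{i+1} ∀ i ≤ k-1}`
(the `i`-th coordinate, `i ∈ {1,…,k}`, has 0-based index `i - 1`). -/
def unitPolytope (k : ℕ) : Set (Fin k → ℝ) :=
  {x | (∀ i : Fin k, 0 ≤ x i ∧ x i < (i : ℝ) + 1) ∧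
       ∀ i j : Fin k, (j : ℕ) = (i : ℕ) + 1 → x i < x j}

/-- The sub-polytope `P̄_{k,d} = {x ∈ ℝ^k : d_i - 1 ≤ x_i < d_i ∀ i, x_i < x_{i+1} ∀ i ≤ k-1}`. -/
def subPolytope {k : ℕ} (d : Fin k → ℕ) : Set (Fin k → ℝ) :=
  {x | (∀ i : Fin k, (d i : ℝ) - 1 ≤ x i ∧ x i < (d i : ℝ)) ∧
       ∀ i j : Fin k, (j : ℕ) = (i : ℕ) + 1 → x i < x j}

/-- The polytopes constrain only consecutive coordinates; the order on all of `Fin k` follows. -/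
theorem monotone_of_lt_next {k : ℕ} (x : Fin k → ℝ)
    (hlt : ∀ i j : Fin k, (j : ℕ) = (i : ℕ) + 1 → x i < x j) : Monotone x := by
  cases k with
  | zero => exact fun i => i.elim0
  | succ n => exact Fin.monotone_iff_le_succ.2 fun i => (hlt _ _ (by simp)).le

/-- The unit polytope is the disjoint union, over all Dyck path vectors `d` of length `k`,
of the sub-polytopes `P̄_{k,d}`. -/
theorem unitPolytope_eq_disjoint_union_subPolytopes (k : ℕ) (hk : 0 < k) :
    unitPolytope k = (⋃ d ∈ {d : Fin k → ℕ | IsDyckVector d}, subPolytope d) ∧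
    {d : Fin k → ℕ | IsDyckVector d}.PairwiseDisjoint (fun d => subPolytope d) := by
  constructor
  · ext x
    simp only [Set.mem_iUnion, Set.mem_ofPred_eq, exists_prop]
    constructor
    · rintro ⟨hx, hlt⟩
      have hmono : Monotone x := monotone_of_lt_next x hlt
      refine ⟨fun i => ⌊x i⌋₊ + 1, ⟨fun i j hij => ?_, fun i => ⟨?_, ?_⟩⟩, fun i => ⟨?_, ?_⟩, hlt⟩
      · have := Nat.floor_mono (hmono hij)
        simpa using this
      · simp
      · have h : ⌊x i⌋₊ < (i : ℕ) + 1 := by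
          rw [Nat.floor_lt (hx i).1]
          push_cast
          exact (hx i).2
        exact h
      · push_cast
        linarith [Nat.floor_le (hx i).1]
      · push_cast
        exact Nat.lt_floor_add_one (x i)
    · rintro ⟨d, ⟨-, hd⟩, hx, hlt⟩
      refine ⟨fun i => ⟨?_, ?_⟩, hlt⟩
      · have h : (1 : ℝ) ≤ d i := by exact_mod_cast (hd i).1
        linarith [(hx i).1]
      · have h : (d i : ℝ) ≤ (i : ℝ) + 1 := by exact_mod_cast (hd i).2
        linarith [(hx i).2]
  · intro d _ e _ hne
    refine Set.disjoint_left.2 fun x hxd hxe => hne (funext fun i => ?_)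
    have hde : (d i : ℝ) < e i + 1 := by linarith [(hxd.1 i).1, (hxe.1 i).2]
    have hed : (e i : ℝ) < d i + 1 := by linarith [(hxe.1 i).1, (hxd.1 i).2]
    norm_cast at hde hed
    omega
end
end

section
/- For every positive integer k, the k-dimensional Lebesgue measure of the unit polytope P̄_k equals (k+1)^{k-1} / k!; consequently, for every ρ > 0, the Lebesgue measure of the scaled polytope P_k = {x ∈ ℝ^k : 0 ≤ x_i < iρ for all 1 ≤ i ≤ k, and x_i < x_{i+1} for all 1 ≤ i ≤ k−1} equals ρ^k (k+1)^{k-1} / k!. -/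
/-!
Allow the upper bounds to be `x_i < i * ρ + c` (0-based) with a free offset `c ≥ 0`, and make the
lower bound strict, which changes only a null set. Fixing the first coordinate `s ∈ (0, c)` and
subtracting it from the others leaves the polytope of one dimension less with offset `c - s + ρ`
(`cons_mem_openPolytope`). By Fubini and translation invariance the volume `V_k(c)` therefore
satisfies `V_{k+1}(c) = ∫_0^c V_k(c - s + ρ) ds`, `V_0 = 1` (`volume_openPolytope_succ`). The Abel
polynomials `A_k(c) = c (c + k ρ)^(k-1) / k!` satisfy `A_{k+1}'(c) = A_k(c + ρ)` and vanish at `0`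
for `k ≥ 1`, so they solve the same recursion (`hasDerivAt_abelPoly`, `lintegral_abelPoly`). Taking
`c = ρ` gives the scaled polytope, and `c = ρ = 1` the unit polytope.
-/

open MeasureTheory

noncomputable section

/-- The scaled polytope `P_k = {x ∈ ℝ^k : 0 ≤ x_i < iρ ∀ i, x_i < x_{i+1} ∀ i ≤ k-1}`. -/
def scaledPolytope (k : ℕ) (ρ : ℝ) : Set (Fin k → ℝ) :=
  {x | (∀ i : Fin k, 0 ≤ x i ∧ x i < ((i : ℝ) + 1) * ρ) ∧
       ∀ i j : Fin k, (j : ℕ) = (i : ℕ) + 1 → x i < x j}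

/-- The open order polytope `{0 < x_0 < ⋯ < x_{k-1}, x_i < i * ρ + c}`, with the slope `ρ` and the
offset `c` of the upper bounds kept independent. -/
def openPolytope (ρ : ℝ) (k : ℕ) (c : ℝ) : Set (Fin k → ℝ) :=
  {x | (∀ i : Fin k, 0 < x i ∧ x i < (i : ℝ) * ρ + c) ∧ StrictMono x}

/-- The Abel polynomial `c (c + k ρ)^(k-1) / k!`, with value `1` at `k = 0`. -/
def abelPoly (ρ : ℝ) : ℕ → ℝ → ℝ
  | 0, _ => 1
  | n + 1, c => c * (c + (n + 1) * ρ) ^ n / (Nat.factorial (n + 1) : ℝ)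

lemma hasDerivAt_abelPoly (ρ : ℝ) (n : ℕ) (c : ℝ) :
    HasDerivAt (abelPoly ρ (n + 1)) (abelPoly ρ n (c + ρ)) c := by
  cases n with
  | zero =>
    have h : abelPoly ρ 1 = fun c => c := by ext c; simp [abelPoly]
    rw [h]
    exact hasDerivAt_id' c
  | succ m =>
    have h1 : HasDerivAt (fun c : ℝ => c + (((m + 1 : ℕ) : ℝ) + 1) * ρ) 1 c :=
      (hasDerivAt_id' c).add_const _
    have h := ((hasDerivAt_id' c).fun_mul (h1.fun_pow (m + 1))).div_const
      (Nat.factorial (m + 1 + 1) : ℝ)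
    refine h.congr_deriv ?_
    have hf : (Nat.factorial (m + 1) : ℝ) ≠ 0 := by positivity
    have hm : (m : ℝ) + 1 + 1 ≠ 0 := by positivity
    rw [Nat.factorial_succ (m + 1)]
    simp only [abelPoly]
    push_cast
    field_simp
    ring

lemma abelPoly_nonneg {ρ : ℝ} (hρ : 0 ≤ ρ) (n : ℕ) {c : ℝ} (hc : 0 ≤ c) : 0 ≤ abelPoly ρ n c := by
  cases n with
  | zero => simp [abelPoly]
  | succ n => simp only [abelPoly]; positivity

lemma continuous_abelPoly (ρ : ℝ) (n : ℕ) : Continuous (abelPoly ρ n) := by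
  cases n with
  | zero => exact continuous_const
  | succ n =>
    exact continuous_iff_continuousAt.2 fun c => (hasDerivAt_abelPoly ρ n c).continuousAt

lemma lintegral_abelPoly {ρ : ℝ} (hρ : 0 ≤ ρ) (n : ℕ) {c : ℝ} (hc : 0 ≤ c) :
    ∫⁻ s in Set.Ioo 0 c, ENNReal.ofReal (abelPoly ρ n (c - s + ρ))
      = ENNReal.ofReal (abelPoly ρ (n + 1) c) := by
  have hcont : Continuous fun s : ℝ => abelPoly ρ n (c - s + ρ) :=
    (continuous_abelPoly ρ n).comp (by fun_prop)
  have hFTC : ∫ s in (0 : ℝ)..c, abelPoly ρ n (c - s + ρ) = abelPoly ρ (n + 1) c := by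
    have hd : ∀ s ∈ Set.uIcc 0 c, HasDerivAt (fun s => -abelPoly ρ (n + 1) (c - s))
        (abelPoly ρ n (c - s + ρ)) s := fun s _ => by
      have h := ((hasDerivAt_abelPoly ρ n (c - s)).comp s
        ((hasDerivAt_id' s).const_sub c)).fun_neg
      simpa using h
    rw [intervalIntegral.integral_eq_sub_of_hasDerivAt hd (hcont.intervalIntegrable _ _)]
    simp [abelPoly]
  rw [← hFTC, intervalIntegral.integral_of_le hc, integral_Ioc_eq_integral_Ioo,
    ofReal_integral_eq_lintegral_ofReal]
  · exact (hcont.integrableOn_Icc (a := 0) (b := c)).mono_set Set.Ioo_subset_Icc_self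
  · filter_upwards [ae_restrict_mem measurableSet_Ioo] with s hs
    exact abelPoly_nonneg hρ n (by linarith [hs.2])

lemma measurableSet_openPolytope (ρ : ℝ) (k : ℕ) (c : ℝ) :
    MeasurableSet (openPolytope ρ k c) := by
  have h : openPolytope ρ k c = (⋂ i : Fin k, {x | 0 < x i} ∩ {x | x i < (i : ℝ) * ρ + c}) ∩
      ⋂ i : Fin k, ⋂ j : Fin k, ⋂ _ : i < j, {x | x i < x j} := by
    ext x
    simp [openPolytope, StrictMono]
  rw [h]
  refine (MeasurableSet.iInter fun i => ?_).inter (MeasurableSet.iInter fun i =>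
    MeasurableSet.iInter fun j => MeasurableSet.iInter fun _ =>
      measurableSet_lt (measurable_pi_apply i) (measurable_pi_apply j))
  exact (measurableSet_lt measurable_const (measurable_pi_apply i)).inter
    (measurableSet_lt (measurable_pi_apply i) measurable_const)

/-- Once the first coordinate `s` is fixed, the remaining ones shifted by `-s` range over the
polytope of one dimension less, whose offset is `c - s + ρ`. -/
lemma cons_mem_openPolytope (ρ : ℝ) (k : ℕ) (c s : ℝ) (y : Fin k → ℝ) :
    (Fin.cons s y : Fin (k + 1) → ℝ) ∈ openPolytope ρ (k + 1) c ↔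
      s ∈ Set.Ioo 0 c ∧ (y + fun _ => -s) ∈ openPolytope ρ k (c - s + ρ) := by
  simp only [openPolytope, Set.mem_ofPred_eq, Fin.forall_fin_succ, Fin.cons_zero, Fin.cons_succ,
    Fin.val_zero, Fin.val_succ, Set.mem_Ioo, Pi.add_apply]
  constructor
  · rintro ⟨⟨⟨h0, h1⟩, h2⟩, h3⟩
    refine ⟨⟨h0, by simpa using h1⟩, fun i => ⟨?_, ?_⟩, fun i j hij => ?_⟩
    · have := h3 (Fin.succ_pos i)
      simp only [Fin.cons_zero, Fin.cons_succ] at this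
      linarith
    · have := (h2 i).2
      push_cast at this
      linarith
    · have := h3 (Fin.succ_lt_succ_iff.2 hij)
      simp only [Fin.cons_succ] at this
      simpa using this
  · rintro ⟨⟨h0, h1⟩, h2, h3⟩
    refine ⟨⟨⟨h0, by simpa using h1⟩, fun i => ⟨by linarith [(h2 i).1], ?_⟩⟩, ?_⟩
    · have := (h2 i).2
      push_cast
      linarith
    · intro i j hij
      induction j using Fin.cases with
      | zero => exact absurd hij (Fin.not_lt_zero i)
      | succ j =>
        induction i using Fin.cases with
        | zero => simp only [Fin.cons_zero, Fin.cons_succ]; linarith [(h2 j).1]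
        | succ i =>
          have := h3 (Fin.succ_lt_succ_iff.1 hij)
          simpa using this

/-- Fubini in the first coordinate. -/
lemma volume_openPolytope_succ (ρ : ℝ) (k : ℕ) (c : ℝ) :
    volume (openPolytope ρ (k + 1) c)
      = ∫⁻ s in Set.Ioo 0 c, volume (openPolytope ρ k (c - s + ρ)) := by
  have hmp := (volume_preserving_piFinSuccAbove (fun _ : Fin (k + 1) => ℝ) 0).symm
  have hmeas := measurableSet_openPolytope ρ (k + 1) c
  rw [← hmp.measure_preimage hmeas.nullMeasurableSet, Measure.volume_eq_prod,
    Measure.prod_apply (hmp.measurable hmeas), ← lintegral_indicator measurableSet_Ioo]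
  refine lintegral_congr fun s => ?_
  have hfib : Prod.mk s ⁻¹' ((MeasurableEquiv.piFinSuccAbove (fun _ : Fin (k + 1) => ℝ) 0).symm ⁻¹'
      openPolytope ρ (k + 1) c) = {y | s ∈ Set.Ioo 0 c ∧
        (y + fun _ => -s) ∈ openPolytope ρ k (c - s + ρ)} := by
    ext y
    rw [Set.mem_ofPred_eq, ← cons_mem_openPolytope]
    simp [MeasurableEquiv.piFinSuccAbove, Fin.insertNthEquiv]
  rw [hfib]
  by_cases hs : s ∈ Set.Ioo 0 c
  · simp only [hs, true_and, Set.indicator_of_mem]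
    exact measure_preimage_add_right volume (fun _ => -s) _
  · simp [hs]

lemma volume_openPolytope {ρ : ℝ} (hρ : 0 ≤ ρ) (k : ℕ) {c : ℝ} (hc : 0 ≤ c) :
    volume (openPolytope ρ k c) = ENNReal.ofReal (abelPoly ρ k c) := by
  induction k generalizing c with
  | zero =>
    have : openPolytope ρ 0 c = Set.univ :=
      Set.eq_univ_of_forall fun x => ⟨fun i => i.elim0, fun i => i.elim0⟩
    simp [this, abelPoly, volume_pi]
  | succ k ih =>
    rw [volume_openPolytope_succ, ← lintegral_abelPoly hρ k hc]
    exact setLIntegral_congr_fun measurableSet_Ioo fun s hs => ih (by linarith [hs.2])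

/-- The scaled polytope agrees with an open polytope outside the hyperplane `x 0 = 0`. -/
lemma scaledPolytope_ae_eq (n : ℕ) (ρ : ℝ) :
    scaledPolytope (n + 1) ρ =ᵐ[volume] openPolytope ρ (n + 1) ρ := by
  have h0 : ∀ᵐ x : Fin (n + 1) → ℝ, x 0 ≠ 0 := by
    rw [volume_pi]
    exact Measure.ae_eval_ne (μ := fun _ : Fin (n + 1) => volume) 0 0
  filter_upwards [h0] with x hx
  refine propext ⟨?_, ?_⟩
  · rintro ⟨h1, h2⟩
    have hmono : StrictMono x := Fin.strictMono_iff_lt_succ.2 fun i => h2 _ _ (by simp)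
    refine ⟨fun i => ⟨?_, by linarith [(h1 i).2]⟩, hmono⟩
    exact (lt_of_le_of_ne (h1 0).1 hx.symm).trans_le (hmono.monotone (Fin.zero_le i))
  · rintro ⟨h1, h2⟩
    exact ⟨fun i => ⟨(h1 i).1.le, by linarith [(h1 i).2]⟩,
      fun i j hij => h2 (Fin.lt_def.2 (by omega))⟩

lemma volume_scaledPolytope_succ (n : ℕ) {ρ : ℝ} (hρ : 0 ≤ ρ) :
    volume (scaledPolytope (n + 1) ρ)
      = ENNReal.ofReal (ρ ^ (n + 1) * ((n + 1 : ℕ) + 1 : ℝ) ^ n / (Nat.factorial (n + 1) : ℝ)) := by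
  rw [measure_congr (scaledPolytope_ae_eq n ρ), volume_openPolytope hρ _ hρ]
  have : ρ + ((n : ℝ) + 1) * ρ = ρ * ((n + 1 : ℕ) + 1 : ℝ) := by push_cast; ring
  simp only [abelPoly, this, mul_pow]
  congr 2
  ring

/-- The Lebesgue measure of the unit polytope `P̄_k` is `(k+1)^(k-1)/k!`; consequently the
measure of the scaled polytope `P_k` is `ρ^k (k+1)^(k-1)/k!` for every `ρ > 0`. -/
theorem volume_unitPolytope_and_scaledPolytope (k : ℕ) (hk : 0 < k) :
    volume (unitPolytope k)
      = ENNReal.ofReal ((k + 1 : ℝ) ^ (k - 1) / (Nat.factorial k : ℝ)) ∧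
    ∀ ρ : ℝ, 0 < ρ →
      volume (scaledPolytope k ρ)
        = ENNReal.ofReal (ρ ^ k * (k + 1 : ℝ) ^ (k - 1) / (Nat.factorial k : ℝ)) := by
  obtain ⟨n, rfl⟩ : ∃ n, k = n + 1 := ⟨k - 1, by omega⟩
  refine ⟨?_, fun ρ hρ => volume_scaledPolytope_succ n hρ.le⟩
  have h : unitPolytope (n + 1) = scaledPolytope (n + 1) 1 := by
    simp [unitPolytope, scaledPolytope]
  rw [h, volume_scaledPolytope_succ n zero_le_one, one_pow, one_mul]
  rfl
end
end
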